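/- Fix reals a > b > 0, set T = log(a/b), and fix β with 0 < β < T·(a−b)/2; set γ = √(β² + a·b·T²) and η(a,b,β) = a + b + β − 2γ/T + (β/T)·log((γ+β)/(γ−β)). For each integer n ≥ 3, let Z₁, …, Z_{⌈n/2⌉} be i.i.d. Bernoulli with success probability min(1, b·log n/n) and W₁, …, W_{⌈n/2⌉} be i.i.d. Bernoulli with success probability min(1, a·log n/n), all mutually independent. Then for every ε > 0 there exists N such that for all n ≥ N, P( Σ_{k=1}^{⌈n/2⌉} (Z_k − W_k) ≥ (β/T)·log n ) ≤ n^{−η(a,b,β)/2 + ε}. -/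

import Mathlib

open MeasureTheory ProbabilityTheory Filter

/-- `⌈n/2⌉`. -/
noncomputable def half (n : ℕ) : ℕ := ⌈(n : ℝ) / 2⌉₊

/- The Chernoff bound compares the sum with a Skellam variable, i.e. a difference of two independent
Poisson variables: since `1 + u ≤ exp u`, the moment generating function of a Bernoulli variable
is at most that of the Poisson variable with the same mean. Minimising over the tilting parameter
turns the Skellam cumulant generating function into its Legendre transform, an explicit rate
function. With `⌈n/2⌉` variables of success probabilities `b log n / n` and `a log n / n`, the means
are asymptotically `(b / 2) log n` and `(a / 2) log n`, and the rate at the threshold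
`(β / T) log n` is `(η / 2) log n`. -/

section BernoulliSum

open unitInterval

variable {Ω : Type*} {mΩ : MeasurableSpace Ω} {μ : Measure Ω}

lemma hasLaw_bernoulliMeasure_of_measure_eq {E : Type*} [MeasurableSpace E]
    [MeasurableSingletonClass E] [IsProbabilityMeasure μ] {X : Ω → E} (hX : AEMeasurable X μ)
    {x y : E} (hxy : x ≠ y) {p : I} (hx : μ {ω | X ω = x} = ENNReal.ofReal p)
    (hy : μ {ω | X ω = y} = 1 - ENNReal.ofReal p) :
    HasLaw X Ber(x, y, p) μ := by
  have hdisj : Disjoint (X ⁻¹' {x}) (X ⁻¹' {y}) :=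
    (Set.disjoint_singleton.2 hxy).preimage X
  have hunion : μ (X ⁻¹' {x} ∪ X ⁻¹' {y}) = 1 := by
    rw [measure_union₀ (hX.nullMeasurableSet_preimage (measurableSet_singleton y)) hdisj.aedisjoint]
    exact (congr_arg₂ _ hx hy).trans (add_tsub_cancel_of_le (ENNReal.ofReal_le_one.2 p.2.2))
  have hae : ∀ᵐ ω ∂μ, X ω = x ∨ X ω = y := by
    refine (prob_compl_eq_zero_iff₀ ?_).2 hunion
    exact (hX.nullMeasurableSet_preimage (measurableSet_singleton x)).union
      (hX.nullMeasurableSet_preimage (measurableSet_singleton y))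
  refine ⟨hX, ?_⟩
  rw [(Measure.ae_eq_or_eq_iff_map_eq_dirac_add_dirac hX hxy).1 hae]
  change μ {ω | X ω = x} • _ + μ {ω | X ω = y} • _ = _
  have hp : ENNReal.ofReal p = (toNNReal p : ENNReal) := ENNReal.ofReal_eq_coe_nnreal p.2.1
  have hσp : 1 - ENNReal.ofReal p = (toNNReal (σ p) : ENNReal) := by
    rw [← ENNReal.ofReal_one, ← ENNReal.ofReal_sub 1 p.2.1, ← coe_symm_eq]
    exact ENNReal.ofReal_eq_coe_nnreal (σ p).2.1
  rw [hx, hy, hσp, hp, bernoulliMeasure_def]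
  rfl

lemma mgf_le_exp_of_hasLaw_bernoulliMeasure {X : Ω → ℝ} {x : ℝ} {p : I}
    (hX : HasLaw X Ber(x, 0, p) μ) (t : ℝ) :
    mgf X μ t ≤ Real.exp (p * (Real.exp (t * x) - 1)) := by
  have hmgf : mgf X μ t = p * (Real.exp (t * x) - 1) + 1 := by
    rw [← mgf_id_map hX.aemeasurable, hX.map_eq, mgf, integral_bernoulliMeasure]
    simp only [id_eq, smul_eq_mul, mul_zero, Real.exp_zero]
    ring
  exact hmgf.trans_le (Real.add_one_le_exp _)

lemma measureReal_sum_ge_le_exp_of_hasLaw_bernoulliMeasure {ι : Type*} [Fintype ι]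
    {X : ι → Ω → ℝ} {x : ι → ℝ} {p : ι → I} (hindep : iIndepFun X μ)
    (hX : ∀ i, HasLaw (X i) Ber(x i, 0, p i) μ) {t : ℝ} (ht : 0 ≤ t) (c : ℝ) :
    μ.real {ω | c ≤ ∑ i, X i ω} ≤ Real.exp (-t * c + ∑ i, p i * (Real.exp (t * x i) - 1)) := by
  have := hindep.isProbabilityMeasure
  have hmgf : mgf (∑ i, X i) μ t = ∏ i, mgf (X i) μ t :=
    hindep.mgf_sum₀ (fun i ↦ (hX i).aemeasurable) Finset.univ
  have hint : Integrable (fun ω ↦ Real.exp (t * (∑ i, X i) ω)) μ := by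
    rw [← mgf_pos_iff, hmgf]
    refine Finset.prod_pos fun i _ ↦ mgf_pos_iff.2 ?_
    exact (integrable_map_measure (f := X i) (g := fun y ↦ Real.exp (t * y)) (by fun_prop)
      (hX i).aemeasurable).1 ((hX i).map_eq ▸ integrable_bernoulliMeasure _ _ _ _)
  calc μ.real {ω | c ≤ ∑ i, X i ω}
      = μ.real {ω | c ≤ (∑ i, X i) ω} := by simp only [Finset.sum_apply]
    _ ≤ Real.exp (-t * c) * ∏ i, mgf (X i) μ t :=
      hmgf ▸ measure_ge_le_exp_mul_mgf c ht hint
    _ ≤ Real.exp (-t * c) * ∏ i, Real.exp (p i * (Real.exp (t * x i) - 1)) := by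
      gcongr with i
      · exact fun _ _ ↦ mgf_nonneg
      · exact mgf_le_exp_of_hasLaw_bernoulliMeasure (hX i) t
    _ = Real.exp (-t * c + ∑ i, p i * (Real.exp (t * x i) - 1)) := by
      rw [Real.exp_add, Real.exp_sum]

end BernoulliSum

/-- The cumulant generating function of the Skellam distribution, the law of the difference of two
independent Poisson variables with means `μ₁` and `μ₂`. -/
noncomputable def skellamCgf (μ₁ μ₂ t : ℝ) : ℝ :=
  μ₁ * (Real.exp t - 1) + μ₂ * (Real.exp (-t) - 1)

/-- For positive `μ₁` and `μ₂`, the point `t` at which `x * t - skellamCgf μ₁ μ₂ t` is maximal: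
`Real.exp t` is the positive root of `μ₁ * y ^ 2 - x * y - μ₂`. -/
noncomputable def skellamTilt (μ₁ μ₂ x : ℝ) : ℝ :=
  Real.log ((√(x ^ 2 + 4 * μ₁ * μ₂) + x) / (2 * μ₁))

/-- The Legendre transform of `skellamCgf μ₁ μ₂` at `x`, which is the rate of the large deviations
of the Skellam distribution. It is encoded by its value at the maximiser `skellamTilt μ₁ μ₂ x`
instead of as a supremum. -/
noncomputable def skellamRate (μ₁ μ₂ x : ℝ) : ℝ :=
  x * skellamTilt μ₁ μ₂ x - skellamCgf μ₁ μ₂ (skellamTilt μ₁ μ₂ x)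

section Skellam

variable {μ₁ μ₂ : ℝ}

lemma abs_lt_sqrt_sq_add (x : ℝ) {c : ℝ} (hc : 0 < c) : |x| < √(x ^ 2 + c) :=
  Real.lt_sqrt_of_sq_lt (by rw [sq_abs]; linarith)

lemma exp_skellamTilt (h₁ : 0 < μ₁) (h₂ : 0 < μ₂) (x : ℝ) :
    Real.exp (skellamTilt μ₁ μ₂ x) = (√(x ^ 2 + 4 * μ₁ * μ₂) + x) / (2 * μ₁) := by
  have hx := neg_lt_of_abs_lt (abs_lt_sqrt_sq_add x (by positivity : 0 < 4 * μ₁ * μ₂))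
  exact Real.exp_log (div_pos (by linarith) (by positivity))

lemma exp_neg_skellamTilt (h₁ : 0 < μ₁) (h₂ : 0 < μ₂) (x : ℝ) :
    Real.exp (-skellamTilt μ₁ μ₂ x) = (√(x ^ 2 + 4 * μ₁ * μ₂) - x) / (2 * μ₂) := by
  have hx := neg_lt_of_abs_lt (abs_lt_sqrt_sq_add x (by positivity : 0 < 4 * μ₁ * μ₂))
  have hsq : √(x ^ 2 + 4 * μ₁ * μ₂) ^ 2 = x ^ 2 + 4 * μ₁ * μ₂ := Real.sq_sqrt (by positivity)
  rw [Real.exp_neg, exp_skellamTilt h₁ h₂, inv_div,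
    div_eq_div_iff (by linarith) (by positivity)]
  linear_combination -hsq

lemma skellamTilt_nonneg (h₁ : 0 < μ₁) {x : ℝ} (hx : μ₁ - μ₂ ≤ x) :
    0 ≤ skellamTilt μ₁ μ₂ x := by
  refine Real.log_nonneg ((one_le_div (by positivity)).2 ?_)
  have hle : 2 * μ₁ - x ≤ √(x ^ 2 + 4 * μ₁ * μ₂) := Real.le_sqrt_of_sq_le (by nlinarith)
  linarith

lemma two_mul_skellamTilt (h₁ : 0 < μ₁) (h₂ : 0 < μ₂) (x : ℝ) :
    2 * skellamTilt μ₁ μ₂ x =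
      Real.log ((√(x ^ 2 + 4 * μ₁ * μ₂) + x) / (√(x ^ 2 + 4 * μ₁ * μ₂) - x)) +
        Real.log (μ₂ / μ₁) := by
  have hx := abs_lt.1 (abs_lt_sqrt_sq_add x (by positivity : 0 < 4 * μ₁ * μ₂))
  have hplus : 0 < √(x ^ 2 + 4 * μ₁ * μ₂) + x := by linarith
  have hminus : 0 < √(x ^ 2 + 4 * μ₁ * μ₂) - x := by linarith
  rw [← Real.log_mul (by positivity) (by positivity)]
  refine Real.exp_injective ?_
  rw [Real.exp_log (by positivity)]
  calc Real.exp (2 * skellamTilt μ₁ μ₂ x)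
      = Real.exp (skellamTilt μ₁ μ₂ x) / Real.exp (-skellamTilt μ₁ μ₂ x) := by
        rw [← Real.exp_sub]; ring_nf
    _ = _ := by
        rw [exp_skellamTilt h₁ h₂, exp_neg_skellamTilt h₁ h₂]
        field_simp

lemma skellamRate_eq (h₁ : 0 < μ₁) (h₂ : 0 < μ₂) (x : ℝ) :
    skellamRate μ₁ μ₂ x = μ₁ + μ₂ - √(x ^ 2 + 4 * μ₁ * μ₂) +
      x / 2 * (Real.log ((√(x ^ 2 + 4 * μ₁ * μ₂) + x) / (√(x ^ 2 + 4 * μ₁ * μ₂) - x)) +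
        Real.log (μ₂ / μ₁)) := by
  rw [← two_mul_skellamTilt h₁ h₂, skellamRate, skellamCgf, exp_skellamTilt h₁ h₂,
    exp_neg_skellamTilt h₁ h₂]
  field_simp
  ring

end Skellam

section LargeDeviation

open unitInterval
open scoped Topology

lemma measureReal_sum_sub_sum_ge_le_exp_skellamCgf {Ω ι κ : Type*} {mΩ : MeasurableSpace Ω}
    {μ : Measure Ω} [Fintype ι] [Fintype κ] {Z : ι → Ω → ℝ} {W : κ → Ω → ℝ} {p : ι → I} {q : κ → I}
    (hindep : iIndepFun (Sum.elim Z W) μ) (hZ : ∀ i, HasLaw (Z i) Ber(1, 0, p i) μ)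
    (hW : ∀ j, HasLaw (W j) Ber(1, 0, q j) μ) {t : ℝ} (ht : 0 ≤ t) (c : ℝ) :
    μ.real {ω | c ≤ ∑ i, Z i ω - ∑ j, W j ω} ≤
      Real.exp (-t * c + skellamCgf (∑ i, p i) (∑ j, q j) t) := by
  have hindep' : iIndepFun (Sum.elim Z fun j ↦ -W j) μ := by
    convert hindep.comp (Sum.elim (fun _ y ↦ y) fun _ y ↦ -y)
      (Sum.rec (fun _ ↦ measurable_id) fun _ ↦ measurable_neg) using 1
    ext (i | j) ω <;> rfl
  have hlaw : ∀ k, HasLaw (Sum.elim Z (fun j ↦ -W j) k)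
      Ber(Sum.elim (fun _ ↦ 1) (fun _ ↦ -1) k, 0, Sum.elim p q k) μ := by
    rintro (i | j)
    · exact hZ i
    · have hneg : HasLaw (-·) Ber(-1, 0, q j) Ber((1 : ℝ), 0, q j) :=
        ⟨measurable_neg.aemeasurable, by
          simpa only [neg_zero] using map_bernoulliMeasure' (1 : ℝ) 0 measurable_neg (q j)⟩
      exact hneg.comp (hW j)
  have hbound := measureReal_sum_ge_le_exp_of_hasLaw_bernoulliMeasure hindep' hlaw ht c
  simpa [skellamCgf, Fintype.sum_sum_type, ← Finset.sum_mul, sub_eq_add_neg] using hbound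

theorem eventually_measureReal_sum_sub_sum_ge_le_exp_neg_skellamRate {α : Type*} {l : Filter α}
    {Ω ι κ : α → Type*} {mΩ : ∀ n, MeasurableSpace (Ω n)} {μ : ∀ n, Measure (Ω n)}
    [∀ n, Fintype (ι n)] [∀ n, Fintype (κ n)]
    {Z : ∀ n, ι n → Ω n → ℝ} {W : ∀ n, κ n → Ω n → ℝ} {p : ∀ n, ι n → I} {q : ∀ n, κ n → I}
    (hindep : ∀ᶠ n in l, iIndepFun (Sum.elim (Z n) (W n)) (μ n))
    (hZ : ∀ᶠ n in l, ∀ i, HasLaw (Z n i) Ber(1, 0, p n i) (μ n))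
    (hW : ∀ᶠ n in l, ∀ j, HasLaw (W n j) Ber(1, 0, q n j) (μ n))
    {L : α → ℝ} {μ₁ μ₂ x : ℝ} (h₁ : 0 < μ₁) (hx : μ₁ - μ₂ ≤ x)
    (hp : Tendsto (fun n ↦ (∑ i, (p n i : ℝ)) / L n) l (𝓝 μ₁))
    (hq : Tendsto (fun n ↦ (∑ j, (q n j : ℝ)) / L n) l (𝓝 μ₂)) {ε : ℝ} (hε : 0 < ε) :
    ∀ᶠ n in l, (μ n).real {ω | x * L n ≤ ∑ i, Z n i ω - ∑ j, W n j ω} ≤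
      Real.exp (L n * (-skellamRate μ₁ μ₂ x + ε)) := by
  set t := skellamTilt μ₁ μ₂ x
  have hL : ∀ᶠ n in l, 0 < L n := by
    filter_upwards [hp.eventually_const_lt h₁] with n hn
    by_contra! hL
    exact hn.not_ge (div_nonpos_of_nonneg_of_nonpos
      (Finset.sum_nonneg fun i _ ↦ (p n i).2.1) hL)
  have hcgf : Tendsto (fun n ↦ skellamCgf ((∑ i, (p n i : ℝ)) / L n) ((∑ j, (q n j : ℝ)) / L n) t) l
      (𝓝 (skellamCgf μ₁ μ₂ t)) :=
    (hp.mul_const _).add (hq.mul_const _)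
  filter_upwards [hindep, hZ, hW, hL, hcgf.eventually_le_const (lt_add_of_pos_right _ hε)]
    with n hindep hZ hW hL hcgf
  calc (μ n).real {ω | x * L n ≤ ∑ i, Z n i ω - ∑ j, W n j ω}
      ≤ Real.exp (-t * (x * L n) + skellamCgf (∑ i, p n i) (∑ j, q n j) t) :=
        measureReal_sum_sub_sum_ge_le_exp_skellamCgf hindep hZ hW (skellamTilt_nonneg h₁ hx) _
    _ = Real.exp (L n *
          (skellamCgf ((∑ i, (p n i : ℝ)) / L n) ((∑ j, (q n j : ℝ)) / L n) t - x * t)) := by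
        simp only [skellamCgf]
        congr 1
        field_simp
        ring
    _ ≤ Real.exp (L n * (-skellamRate μ₁ μ₂ x + ε)) := by
        gcongr
        rw [skellamRate]
        linarith

end LargeDeviation

section LogarithmicDegree

open unitInterval
open scoped Topology

/-- The edge probability `min 1 (c * log n / n)` of a random graph on `n` vertices whose average
degree is logarithmic, as an element of the unit interval. -/
noncomputable def logEdgeProb {c : ℝ} (hc : 0 ≤ c) (n : ℕ) : I :=
  ⟨min 1 (c * Real.log n / n), by positivity, min_le_left _ _⟩

lemma tendsto_half_div_atTop : Tendsto (fun n : ℕ ↦ (half n : ℝ) / n) atTop (𝓝 (1 / 2)) := by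
  refine ((tendsto_nat_ceil_mul_div_atTop (R := ℝ) one_half_pos.le).comp
    tendsto_natCast_atTop_atTop).congr fun n ↦ ?_
  simp only [Function.comp_apply, half, one_div_mul_eq_div]

lemma eventually_mul_log_div_le_one (c : ℝ) : ∀ᶠ n : ℕ in atTop, c * Real.log n / n ≤ 1 := by
  have hlim : Tendsto (fun n : ℕ ↦ Real.log n / n) atTop (𝓝 0) :=
    Real.isLittleO_log_id_atTop.tendsto_div_nhds_zero.comp tendsto_natCast_atTop_atTop
  have hlim' : Tendsto (fun n : ℕ ↦ c * Real.log n / n) atTop (𝓝 0) := by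
    simpa only [mul_zero, mul_div_assoc] using hlim.const_mul c
  exact hlim'.eventually_le_const one_pos

lemma tendsto_sum_logEdgeProb_div_log {c : ℝ} (hc : 0 ≤ c) :
    Tendsto (fun n : ℕ ↦ (∑ _k : Fin (half n), (logEdgeProb hc n : ℝ)) / Real.log n) atTop
      (𝓝 (c / 2)) := by
  have hlim : Tendsto (fun n : ℕ ↦ c * ((half n : ℝ) / n)) atTop (𝓝 (c / 2)) := by
    simpa only [mul_one_div] using tendsto_half_div_atTop.const_mul c
  refine hlim.congr' ?_
  filter_upwards [eventually_mul_log_div_le_one c, eventually_ge_atTop 2] with n hprob hn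
  have hlog : 0 < Real.log n := Real.log_pos (by exact_mod_cast hn)
  simp only [logEdgeProb, min_eq_right hprob, Finset.sum_const, Finset.card_univ, Fintype.card_fin,
    nsmul_eq_mul]
  field_simp

end LogarithmicDegree

lemma two_mul_skellamRate_half {a b : ℝ} (hb : 0 < b) (hab : b < a) (β : ℝ) :
    let T : ℝ := Real.log (a / b)
    let γ : ℝ := √(β ^ 2 + a * b * T ^ 2)
    2 * skellamRate (b / 2) (a / 2) (β / T) =
      a + b + β - 2 * γ / T + (β / T) * Real.log ((γ + β) / (γ - β)) := by
  intro T γ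
  have ha : 0 < a := hb.trans hab
  have hT : 0 < T := Real.log_pos ((one_lt_div hb).2 hab)
  have hsqrt : √((β / T) ^ 2 + 4 * (b / 2) * (a / 2)) = γ / T := by
    rw [← Real.sqrt_sq hT.le, ← Real.sqrt_div' _ (sq_nonneg T), Real.sqrt_sq hT.le]
    congr 1
    field_simp
    ring
  have hlog : Real.log (a / 2 / (b / 2)) = T := by rw [div_div_div_cancel_right₀ two_ne_zero]
  rw [skellamRate_eq (by positivity) (by positivity), hsqrt, hlog, ← add_div γ β T,
    ← sub_div, div_div_div_cancel_right₀ hT.ne']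
  field_simp
  ring

theorem sbm_llr_upper_bound_noisy_side_info_general
    (a b : ℝ) (hb : 0 < b) (hab : b < a)
    (β : ℝ) (hβ : -(Real.log (a / b) * (a - b) / 2) ≤ β)
    (Ω : ℕ → Type*) (mΩ : ∀ n, MeasurableSpace (Ω n)) (P : ∀ n, Measure (Ω n))
    (Z W : ∀ n, Fin (half n) → Ω n → ℝ)
    (hmZ : ∀ n k, AEMeasurable (Z n k) (P n)) (hmW : ∀ n k, AEMeasurable (W n k) (P n))
    (hindep : ∀ n, 3 ≤ n →
      iIndepFun (Sum.elim (Z n) (W n)) (P n))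
    (hZ : ∀ n, 3 ≤ n → ∀ k,
      P n {ω | Z n k ω = 1} = ENNReal.ofReal (min 1 (b * Real.log n / n)) ∧
      P n {ω | Z n k ω = 0} = 1 - ENNReal.ofReal (min 1 (b * Real.log n / n)))
    (hW : ∀ n, 3 ≤ n → ∀ k,
      P n {ω | W n k ω = 1} = ENNReal.ofReal (min 1 (a * Real.log n / n)) ∧
      P n {ω | W n k ω = 0} = 1 - ENNReal.ofReal (min 1 (a * Real.log n / n))) :
    let T : ℝ := Real.log (a / b)
    let γ : ℝ := Real.sqrt (β ^ 2 + a * b * T ^ 2)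
    let η : ℝ := a + b + β - 2 * γ / T + (β / T) * Real.log ((γ + β) / (γ - β))
    ∀ ε > (0 : ℝ), ∃ N : ℕ, ∀ n ≥ N,
      (P n {ω | (β / T) * Real.log n ≤ ∑ k, (Z n k ω - W n k ω)}).toReal
        ≤ (n : ℝ) ^ (-η / 2 + ε) := by
  intro T γ η ε hε
  have hT : 0 < T := Real.log_pos ((one_lt_div hb).2 hab)
  have ha : 0 < a := hb.trans hab
  have hη : 2 * skellamRate (b / 2) (a / 2) (β / T) = η := two_mul_skellamRate_half hb hab β
  have hmean : b / 2 - a / 2 ≤ β / T := by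
    rw [le_div_iff₀ hT]
    linarith
  have hlarge := eventually_ge_atTop (α := ℕ) 3
  have hlaw {c : ℝ} (hc : 0 ≤ c) {n : ℕ} (hn : 3 ≤ n) {X : Ω n → ℝ} (hX : AEMeasurable X (P n))
      (h : P n {ω | X ω = 1} = ENNReal.ofReal (min 1 (c * Real.log n / n)) ∧
        P n {ω | X ω = 0} = 1 - ENNReal.ofReal (min 1 (c * Real.log n / n))) :
      HasLaw X (bernoulliMeasure 1 0 (logEdgeProb hc n)) (P n) :=
    have := (hindep n hn).isProbabilityMeasure
    hasLaw_bernoulliMeasure_of_measure_eq hX one_ne_zero h.1 h.2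
  have hbound := eventually_measureReal_sum_sub_sum_ge_le_exp_neg_skellamRate
    (hlarge.mono hindep) (hlarge.mono fun n hn k ↦ hlaw hb.le hn (hmZ n k) (hZ n hn k))
    (hlarge.mono fun n hn k ↦ hlaw ha.le hn (hmW n k) (hW n hn k)) (half_pos hb)
    hmean (tendsto_sum_logEdgeProb_div_log hb.le) (tendsto_sum_logEdgeProb_div_log ha.le) hε
  obtain ⟨N, hN⟩ := eventually_atTop.1 (hbound.and (eventually_gt_atTop 0))
  refine ⟨N, fun n hn ↦ ?_⟩
  obtain ⟨hbound, hpos⟩ := hN n hn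
  have hexponent : -η / 2 + ε = -skellamRate (b / 2) (a / 2) (β / T) + ε := by linarith
  rw [Real.rpow_def_of_pos (by exact_mod_cast hpos), hexponent]
  simpa only [Finset.sum_sub_distrib, measureReal_def] using hbound

theorem sbm_llr_upper_bound_noisy_side_info
    (a b : ℝ) (hb : 0 < b) (hab : b < a)
    (β : ℝ) (hβ : 0 < β) (hβ2 : β < Real.log (a / b) * (a - b) / 2)
    (Ω : ℕ → Type*) (mΩ : ∀ n, MeasurableSpace (Ω n))
    (P : ∀ n, Measure (Ω n)) (hP : ∀ n, IsProbabilityMeasure (P n))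
    (Z W : ∀ n, Fin (half n) → Ω n → ℝ)
    (hmZ : ∀ n k, Measurable (Z n k)) (hmW : ∀ n k, Measurable (W n k))
    (hindep : ∀ n, 3 ≤ n →
      iIndepFun (Sum.elim (Z n) (W n)) (P n))
    (hZ : ∀ n, 3 ≤ n → ∀ k,
      P n {ω | Z n k ω = 1} = ENNReal.ofReal (min 1 (b * Real.log n / n)) ∧
      P n {ω | Z n k ω = 0} = 1 - ENNReal.ofReal (min 1 (b * Real.log n / n)))
    (hW : ∀ n, 3 ≤ n → ∀ k,
      P n {ω | W n k ω = 1} = ENNReal.ofReal (min 1 (a * Real.log n / n)) ∧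
      P n {ω | W n k ω = 0} = 1 - ENNReal.ofReal (min 1 (a * Real.log n / n))) :
    let T : ℝ := Real.log (a / b)
    let γ : ℝ := Real.sqrt (β ^ 2 + a * b * T ^ 2)
    let η : ℝ := a + b + β - 2 * γ / T + (β / T) * Real.log ((γ + β) / (γ - β))
    ∀ ε > (0 : ℝ), ∃ N : ℕ, ∀ n ≥ N,
      (P n {ω | (β / T) * Real.log n ≤ ∑ k, (Z n k ω - W n k ω)}).toReal
        ≤ (n : ℝ) ^ (-η / 2 + ε) := by
  have hT : 0 < Real.log (a / b) := Real.log_pos ((one_lt_div hb).2 hab)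
  exact sbm_llr_upper_bound_noisy_side_info_general a b hb hab β
    (by linarith [mul_pos hT (sub_pos.2 hab)]) Ω mΩ P Z W
    (fun n k ↦ (hmZ n k).aemeasurable) (fun n k ↦ (hmW n k).aemeasurable) hindep hZ hW
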